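/- Let R be the t×n Hankel determinantal ring over a field F (2 ≤ t ≤ n), and for 1 ≤ k ≤ n-t+2 let p^⟨k⟩ be the ideal of R generated by the (t-1)×(t-1) minors of the (t-1)×(n-k+1) Hankel submatrix in x_1,...,x_{n-k+t-1}. Then (p^⟨k⟩)^2 ⊆ p^⟨k+1⟩ for 1 ≤ k ≤ n-t+1; consequently the radical of the principal ideal generated by Δ = [1 ... t-1 | 1 ... t-1] equals p = p^⟨1⟩. -/

import Mathlib

set_option synthInstance.maxHeartbeats 1000000
set_option maxHeartbeats 1000000

open MvPolynomial Matrix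

/-! Where the `t`-minors of a Hankel matrix vanish, any two `(t - 1)`-minors satisfy the exchange
relation `[ρ | a] [τ | b] = [τ | a] [ρ | b]` between rows and columns. Hence, for `b` among the
first `n - k + 1` columns, the colon ideal `(p^⟨k+1⟩ : [b])` contains every `(t - 1)`-minor of the
`t × (n - k)` Hankel matrix, whatever its rows. By a pencil argument, working with `h_c + X h_{c+1}`
in place of the columns `h_c`, such an ideal contains the `(t - 1)`-minors on the first `t - 1` rows
with one more column as well. So it contains `p^⟨k⟩`, which gives `(p^⟨k⟩)² ⊆ p^⟨k+1⟩` and, by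
iteration, `p ⊆ rad (Δ)`.

The equality amounts to `p` being radical. Modulo the `(t - 1)`-minors every polynomial is a
combination of monomials not divisible by the diagonal term of a minor. All these minors vanish
where the coordinates are a sum of `t - 2` geometric progressions, and a combination of such
monomials vanishing there is zero: this goes by induction on the number of variables, reading off
leading coefficients as the ratio of one progression tends to `0`. -/

open scoped Polynomial

section Minors

variable {R : Type*} [CommRing R] {s : ℕ}

theorem det_mul_eq_sum_prod_mul_det_submatrix {m n : Type*} [Fintype m] [DecidableEq m]
    [Fintype n] (A : Matrix m n R) (B : Matrix n m R) :
    (A * B).det = ∑ ρ : m → n, (∏ i, A i (ρ i)) * (B.submatrix ρ id).det := by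
  classical
  have rows : (A * B).det = detRowAlternating fun i => ∑ k, A i k • B k := by
    refine congrArg det (ext fun i j => ?_)
    simp [mul_apply, Finset.sum_apply]
  rw [rows, ← AlternatingMap.coe_multilinearMap, MultilinearMap.map_sum]
  exact Finset.sum_congr rfl fun ρ _ =>
    MultilinearMap.map_smul_univ _ (fun i => A i (ρ i)) fun i => B (ρ i)

theorem det_mul_mem {m n : Type*} [Fintype m] [DecidableEq m] [Fintype n] {J : Ideal R}
    (A : Matrix m n R) {B : Matrix n m R} (hB : ∀ ρ : m → n, (B.submatrix ρ id).det ∈ J) :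
    (A * B).det ∈ J := by
  rw [det_mul_eq_sum_prod_mul_det_submatrix]
  exact J.sum_mem fun ρ _ => J.mul_mem_left _ (hB ρ)

theorem det_mul_eq_zero_of_card_lt {m n : Type*} [Fintype m] [DecidableEq m] [Fintype n]
    (h : Fintype.card n < Fintype.card m) (A : Matrix m n R) (B : Matrix n m R) :
    (A * B).det = 0 := by
  rw [← Ideal.mem_bot]
  refine det_mul_mem A fun ρ => Ideal.mem_bot.mpr ?_
  obtain ⟨i, j, hij, hρ⟩ := Fintype.exists_ne_map_eq_of_card_lt ρ h
  exact det_zero_of_row_eq hij (by ext1 k; simp [hρ])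

theorem det_submatrix_left {m : Type*} [Fintype m] [DecidableEq m] (σ : m → m)
    (A : Matrix m m R) :
    (A.submatrix σ id).det = ((1 : Matrix m m R).submatrix σ id).det * A.det := by
  rw [← det_mul]
  refine congrArg det (ext fun i j => ?_)
  simp [mul_apply, one_apply]

theorem det_submatrix_right {m : Type*} [Fintype m] [DecidableEq m] (A : Matrix m m R)
    (σ : m → m) :
    (A.submatrix id σ).det = A.det * ((1 : Matrix m m R).submatrix id σ).det := by
  rw [← det_mul]
  refine congrArg det (ext fun i j => ?_)
  simp [mul_apply, one_apply]

/-- The maximal minors of an `(s + 1) × s` matrix with alternating signs: the generalized cross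
product of its columns. -/
def signedMinors (A : Matrix (Fin (s + 1)) (Fin s) R) (i : Fin (s + 1)) : R :=
  (-1) ^ (i : ℕ) * (A.submatrix i.succAbove id).det

theorem det_cons_col (y : Fin (s + 1) → R) (A : Matrix (Fin (s + 1)) (Fin s) R) :
    (of fun i => (Fin.cons (y i) (A i) : Fin (s + 1) → R)).det = signedMinors A ⬝ᵥ y := by
  rw [det_succ_column_zero]
  refine Finset.sum_congr rfl fun i _ => ?_
  have minor : (of fun i => (Fin.cons (y i) (A i) : Fin (s + 1) → R)).submatrix i.succAbove Fin.succ
      = A.submatrix i.succAbove id := by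
    ext; simp
  simp only [minor, of_apply, Fin.cons_zero, signedMinors]
  ring

-- Cramer's rule for `A` bordered by the basis vector `e_k`, whose product with `u` is `u k • e_0`.
theorem mul_signedMinors_comm {A : Matrix (Fin (s + 1)) (Fin s) R} {u : Fin (s + 1) → R}
    (hu : u ᵥ* A = 0) (i k : Fin (s + 1)) :
    u i * signedMinors A k = u k * signedMinors A i := by
  set B : Matrix (Fin (s + 1)) (Fin (s + 1)) R :=
    of fun l => Fin.cons ((Pi.single k 1 : Fin (s + 1) → R) l) (A l) with hB
  have det_B : B.det = signedMinors A k := by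
    rw [hB, det_cons_col, dotProduct_single_one]
  have minor (l : Fin (s + 1)) : B.submatrix l.succAbove Fin.succ = A.submatrix l.succAbove id := by
    ext; simp [hB]
  have adj_B : B.adjugate 0 i = signedMinors A i := by
    simp [adjugate_fin_succ_eq_det_submatrix, signedMinors, minor]
  have u_B : u ᵥ* B = Pi.single 0 (u k) := by
    ext l
    refine Fin.cases ?_ (fun l => ?_) l
    · simp [hB, vecMul, dotProduct, Pi.single_apply]
    · simpa [hB, vecMul, dotProduct] using congrFun hu l
  have cramer : (u ᵥ* B) ᵥ* B.adjugate = B.det • u := by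
    rw [vecMul_vecMul, mul_adjugate, vecMul_smul, vecMul_one]
  have := congrFun cramer i
  rw [u_B, single_vecMul, Pi.smul_apply, Pi.smul_apply, det_B, smul_eq_mul, smul_eq_mul] at this
  rw [mul_comm, ← this]
  exact congrArg _ adj_B

theorem det_submatrix_mul_det_submatrix_comm {A B : Matrix (Fin (s + 1)) (Fin s) R}
    (h : ∀ j, (of fun i => (Fin.cons (B i j) (A i) : Fin (s + 1) → R)).det = 0)
    (ρ τ : Fin s → Fin (s + 1)) :
    (A.submatrix ρ id).det * (B.submatrix τ id).det
      = (A.submatrix τ id).det * (B.submatrix ρ id).det := by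
  have factor (ρ : Fin s → Fin (s + 1)) :
      ∃ (i : Fin (s + 1)) (c : R), ∀ N : Matrix (Fin (s + 1)) (Fin s) R,
        (N.submatrix ρ id).det = c * signedMinors N i := by
    obtain ⟨i, hi⟩ : ∃ i, ∀ k, ρ k ≠ i := by
      by_contra! hρ
      simpa using Fintype.card_le_of_surjective ρ hρ
    choose σ hσ using fun k => Fin.exists_succAbove_eq (hi k)
    refine ⟨i, (-1) ^ (i : ℕ) * ((1 : Matrix (Fin s) (Fin s) R).submatrix σ id).det, fun N => ?_⟩
    have rows : N.submatrix ρ id = (N.submatrix i.succAbove id).submatrix σ id := by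
      ext; simp [hσ]
    rw [rows, det_submatrix_left, signedMinors, mul_mul_mul_comm, ← mul_pow, neg_one_mul, neg_neg,
      one_pow, one_mul]
  have orthogonal : signedMinors A ᵥ* B = 0 := by
    ext j
    rw [vecMul, ← det_cons_col]
    exact h j
  obtain ⟨i, c, hi⟩ := factor ρ
  obtain ⟨k, d, hk⟩ := factor τ
  rw [hi, hi, hk, hk, mul_mul_mul_comm, mul_signedMinors_comm orthogonal, mul_mul_mul_comm]
  ring

end Minors

section Hankel

variable {R S : Type*} [CommRing R] [CommRing S] {m n : Type*} {s q : ℕ}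

/-- The Hankel matrix `(x (f i + g j))` of a sequence `x`, with rows `f` and columns `g`
counted from `0`. -/
def hankel {R : Type*} (x : ℕ → R) (f : m → ℕ) (g : n → ℕ) : Matrix m n R :=
  of fun i j => x (f i + g j)

/-- The minor of the Hankel matrix of `x` on the first `s` rows and the columns `g`. -/
def hankelMinor (x : ℕ → R) (g : Fin s → ℕ) : R :=
  (hankel x Fin.val g).det

/-- The ideal generated by the `s`-minors of the `s × q` Hankel matrix of `x`. Repeated columns
are allowed, which adds only zero and sign changes to the generators. -/
def hankelMinorIdeal (x : ℕ → R) (s q : ℕ) : Ideal R :=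
  Ideal.span (hankelMinor x '' {g : Fin s → ℕ | ∀ j, g j < q})

theorem hankelMinor_mem_hankelMinorIdeal (x : ℕ → R) {g : Fin s → ℕ} (hg : ∀ j, g j < q) :
    hankelMinor x g ∈ hankelMinorIdeal x s q :=
  Ideal.subset_span ⟨g, hg, rfl⟩

theorem hankelMinorIdeal_mono (x : ℕ → R) {q' : ℕ} (h : q ≤ q') :
    hankelMinorIdeal x s q ≤ hankelMinorIdeal x s q' :=
  Ideal.span_mono <| Set.image_mono fun _ hg j => (hg j).trans_le h

theorem map_hankelMinor (φ : R →+* S) (x : ℕ → R) (g : Fin s → ℕ) :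
    φ (hankelMinor x g) = hankelMinor (φ ∘ x) g := by
  rw [hankelMinor, RingHom.map_det]
  rfl

theorem map_hankelMinorIdeal (φ : R →+* S) (x : ℕ → R) (s q : ℕ) :
    (hankelMinorIdeal x s q).map φ = hankelMinorIdeal (φ ∘ x) s q := by
  rw [hankelMinorIdeal, Ideal.map_span, Set.image_image]
  simp only [map_hankelMinor, hankelMinorIdeal]

theorem hankelMinorIdeal_zero (x : ℕ → R) (q : ℕ) : hankelMinorIdeal x 0 q = ⊤ := by
  rw [Ideal.eq_top_iff_one, ← det_fin_zero (A := hankel x Fin.val Fin.elim0)]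
  exact hankelMinor_mem_hankelMinorIdeal x fun j => j.elim0

theorem hankelMinorIdeal_self (x : ℕ → R) (s : ℕ) :
    hankelMinorIdeal x s s = Ideal.span {hankelMinor x (Fin.val : Fin s → ℕ)} := by
  refine le_antisymm (Ideal.span_le.mpr ?_) ?_
  · rintro _ ⟨g, hg, rfl⟩
    exact Ideal.mem_span_singleton.mpr
      ⟨_, det_submatrix_right (hankel x Fin.val Fin.val) fun j => ⟨g j, hg j⟩⟩
  · rw [Ideal.span_singleton_le_iff_mem]
    exact hankelMinor_mem_hankelMinorIdeal x Fin.is_lt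

theorem hankelMinorIdeal_succ_le (x : ℕ → R) (s q : ℕ) :
    hankelMinorIdeal x (s + 1) q ≤ hankelMinorIdeal x s q := by
  refine Ideal.span_le.mpr ?_
  rintro _ ⟨g, hg, rfl⟩
  rw [SetLike.mem_coe, hankelMinor, det_succ_row _ (Fin.last s)]
  refine Ideal.sum_mem _ fun j _ => Ideal.mul_mem_left _ _ ?_
  rw [Fin.succAbove_last]
  exact hankelMinor_mem_hankelMinorIdeal x fun k => hg (j.succAbove k)

theorem span_hankelMinor_fin (x : ℕ → R) (s : ℕ) {q n : ℕ} (h : q ≤ n) :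
    Ideal.span {y | ∃ g : Fin s → Fin n, (∀ j, (g j : ℕ) < q) ∧ y = hankelMinor x fun j => g j}
      = hankelMinorIdeal x s q := by
  refine congrArg Ideal.span (Set.ext fun y => ⟨?_, ?_⟩)
  · rintro ⟨g, hg, rfl⟩
    exact ⟨_, hg, rfl⟩
  · rintro ⟨g, hg, rfl⟩
    exact ⟨fun j => ⟨g j, (hg j).trans_le h⟩, hg, rfl⟩

theorem span_range_hankelMinor (x : ℕ → R) (s n : ℕ) :
    Ideal.span (Set.range fun g : Fin s → Fin n => hankelMinor x fun j => g j)
      = hankelMinorIdeal x s n := by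
  rw [← span_hankelMinor_fin x s le_rfl]
  simp only [Fin.is_lt, implies_true, true_and, Set.range, eq_comm]

end Hankel

section Pencil

variable {R : Type*} [CommRing R] {s q : ℕ} (x : ℕ → R)

/-- The `s × s` matrix over `R[X]` whose columns are `h_c + X h_{c+1}` for the entries `c` of `a`,
where `h_c` is the `c`-th column of the Hankel matrix of `x` with `s` rows. -/
noncomputable def hankelPencil (a : Fin s → ℕ) : Matrix (Fin s) (Fin s) R[X] :=
  (Polynomial.X : R[X]) • (hankel x (fun i : Fin s => i + 1) a).map Polynomial.C
    + (hankel x Fin.val a).map Polynomial.C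

/-- The determinant of `hankelPencil x a` with its column `j` replaced by the constant column
`h_c`. -/
noncomputable def pencilMinor (a : Fin s → ℕ) (j : Fin s) (c : ℕ) : R[X] :=
  ((hankelPencil x a).updateCol j fun i => Polynomial.C (x (i + c))).det

variable {x}

theorem det_hankelPencil_mem {J : Ideal R} {a : Fin s → ℕ}
    (hJ : ∀ ρ : Fin s → Fin (s + 1), (hankel x (fun i => ρ i) a).det ∈ J) :
    (hankelPencil x a).det ∈ J.map (Polynomial.C : R →+* R[X]) := by
  set L : Matrix (Fin s) (Fin (s + 1)) R[X] :=
    of fun i => Pi.single i.castSucc 1 + Pi.single i.succ Polynomial.X with hL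
  have factor : hankelPencil x a
      = L * (hankel x (Fin.val : Fin (s + 1) → ℕ) a).map Polynomial.C := by
    ext1 i j
    simp [hankelPencil, hankel, hL, mul_apply, add_mul, Finset.sum_add_distrib, Pi.single_apply,
      add_comm]
  rw [factor]
  refine det_mul_mem L fun ρ => ?_
  have := Ideal.mem_map_of_mem (Polynomial.C : R →+* R[X]) (hJ ρ)
  rwa [RingHom.map_det] at this

theorem pencilMinor_add_X_mul_pencilMinor_succ (a : Fin s → ℕ) (j : Fin s) (c : ℕ) :
    pencilMinor x a j c + Polynomial.X * pencilMinor x a j (c + 1)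
      = (hankelPencil x (Function.update a j c)).det := by
  rw [pencilMinor, pencilMinor, ← det_updateCol_smul, ← det_updateCol_add]
  refine congrArg det (ext fun i k => ?_)
  rcases eq_or_ne k j with rfl | hk
  · simp [hankelPencil, hankel, add_comm, add_assoc, add_left_comm]
  · simp [hankelPencil, hankel, hk]

theorem pencilMinor_eq_det_X_smul_add (a : Fin s → ℕ) (j : Fin s) (c : ℕ) :
    pencilMinor x a j c
      = ((Polynomial.X : R[X]) •
            ((hankel x (fun i : Fin s => i + 1) a).updateCol j 0).map Polynomial.C
          + (hankel x Fin.val (Function.update a j c)).map Polynomial.C).det := by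
  refine congrArg det (ext fun i k => ?_)
  rcases eq_or_ne k j with rfl | hk
  · simp [hankel]
  · simp [hankelPencil, hankel, hk]

theorem pencilMinor_coeff_zero (a : Fin s → ℕ) (j : Fin s) (c : ℕ) :
    (pencilMinor x a j c).coeff 0 = hankelMinor x (Function.update a j c) := by
  rw [pencilMinor_eq_det_X_smul_add, Polynomial.coeff_det_X_add_C_zero, hankelMinor]

theorem pencilMinor_coeff_eq_zero (a : Fin s → ℕ) (j : Fin s) (c : ℕ) {d : ℕ} (hd : s ≤ d) :
    (pencilMinor x a j c).coeff d = 0 := by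
  rw [pencilMinor_eq_det_X_smul_add]
  rcases hd.eq_or_lt with rfl | hd
  · have top := Polynomial.coeff_det_X_add_C_card
      ((hankel x (fun i : Fin s => i + 1) a).updateCol j 0)
      (hankel x Fin.val (Function.update a j c))
    rw [Fintype.card_fin] at top
    rw [top]
    exact det_eq_zero_of_column_eq_zero j (by simp)
  · refine Polynomial.coeff_eq_zero_of_natDegree_lt
      ((Polynomial.natDegree_det_X_add_C_le _ _).trans_lt ?_)
    rwa [Fintype.card_fin]

theorem X_pow_mul_pencilMinor_sub_mem {J : Ideal R} (a : Fin s → ℕ) (j : Fin s) {c : ℕ}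
    (hJ : ∀ d < c, ∀ ρ : Fin s → Fin (s + 1),
      (hankel x (fun i => ρ i) (Function.update a j d)).det ∈ J) :
    Polynomial.X ^ c * pencilMinor x a j c - (-1) ^ c * pencilMinor x a j 0
      ∈ J.map (Polynomial.C : R →+* R[X]) := by
  induction c with
  | zero => simp
  | succ c ih =>
    have step := det_hankelPencil_mem (hJ c c.lt_succ_self)
    rw [← pencilMinor_add_X_mul_pencilMinor_succ] at step
    convert! Ideal.sub_mem _ (Ideal.mul_mem_left _ (Polynomial.X ^ c) step)
      (ih fun d hd => hJ d (hd.trans c.lt_succ_self)) using 1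
    ring

-- Modulo the given minors `h_c = -X h_{c+1}`, so `X ^ q` times the pencil minor of `h_q` is, up to
-- sign, that of `h_0`, which has degree less than `s ≤ q`. Hence the former vanishes, and its
-- constant coefficient is the minor wanted.
theorem hankelMinor_update_mem {J : Ideal R} (hsq : s ≤ q) (a : Fin s → ℕ) (j : Fin s)
    (hJ : ∀ d < q, ∀ ρ : Fin s → Fin (s + 1),
      (hankel x (fun i => ρ i) (Function.update a j d)).det ∈ J) :
    hankelMinor x (Function.update a j q) ∈ J := by
  have coeff_q := Ideal.mem_map_C_iff.mp (X_pow_mul_pencilMinor_sub_mem a j hJ) q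
  have sign : (-1 : R[X]) ^ q = Polynomial.C ((-1) ^ q) := by simp
  rwa [Polynomial.coeff_sub, Polynomial.coeff_X_pow_mul', if_pos le_rfl, Nat.sub_self,
    pencilMinor_coeff_zero, sign, Polynomial.coeff_C_mul, pencilMinor_coeff_eq_zero _ _ _ hsq,
    mul_zero, sub_zero] at coeff_q

theorem hankelMinor_mem_of_forall_rows {J : Ideal R} (hsq : s ≤ q)
    (hJ : ∀ (ρ : Fin s → Fin (s + 1)) (a : Fin s → ℕ), (∀ j, a j < q) →
      (hankel x (fun i => ρ i) a).det ∈ J)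
    {b : Fin s → ℕ} (hb : ∀ j, b j < q + 1) : hankelMinor x b ∈ J := by
  by_cases hlt : ∀ j, b j < q
  · exact hJ Fin.castSucc b hlt
  obtain ⟨j, hj⟩ : ∃ j, b j = q := by
    push Not at hlt
    exact hlt.imp fun j hj => by have := hb j; omega
  by_cases hdup : ∃ k, k ≠ j ∧ b k = q
  · obtain ⟨k, hkj, hk⟩ := hdup
    rw [hankelMinor, det_zero_of_column_eq hkj (by simp [hankel, hj, hk])]
    exact J.zero_mem
  push Not at hdup
  rw [← Function.update_eq_self j b, hj]
  refine hankelMinor_update_mem hsq b j fun d hd ρ => hJ ρ _ fun k => ?_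
  rcases eq_or_ne k j with rfl | hk
  · simpa using hd
  · have := hb k
    have := hdup k hk
    simp only [Function.update_of_ne hk]
    omega

end Pencil

section Squares

variable {R : Type*} [CommRing R] {x : ℕ → R} {s q n : ℕ}

theorem hankelMinorIdeal_sq_le (h : hankelMinorIdeal x (s + 1) (q + 1) = ⊥) (hsq : s ≤ q) :
    hankelMinorIdeal x s (q + 1) ^ 2 ≤ hankelMinorIdeal x s q := by
  rw [pow_two]
  nth_rw 1 2 [hankelMinorIdeal]
  rw [Ideal.span_mul_span', Ideal.span_le]
  rintro _ ⟨_, ⟨a, ha, rfl⟩, _, ⟨b, hb, rfl⟩, rfl⟩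
  suffices hankelMinor x a ∈ (hankelMinorIdeal x s q).colon {hankelMinor x b} from
    Submodule.mem_colon_singleton.mp this
  refine hankelMinor_mem_of_forall_rows hsq (fun ρ c hc => ?_) ha
  rw [Submodule.mem_colon_singleton, smul_eq_mul]
  have minors (j : Fin s) : hankelMinor x (Fin.cons (b j) c : Fin (s + 1) → ℕ) = 0 := by
    rw [← Ideal.mem_bot, ← h]
    refine hankelMinor_mem_hankelMinorIdeal x (Fin.cases (hb j) fun k => ?_)
    exact (hc k).trans (Nat.lt_succ_self q)
  have swap := det_submatrix_mul_det_submatrix_comm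
    (A := hankel x (Fin.val : Fin (s + 1) → ℕ) c) (B := hankel x Fin.val b) (fun j => ?_)
    ρ Fin.castSucc
  · exact swap ▸ Ideal.mul_mem_right _ _ (hankelMinor_mem_hankelMinorIdeal x hc)
  · rw [← minors j, hankelMinor]
    refine congrArg det (ext fun i k => ?_)
    refine Fin.cases ?_ (fun k => ?_) k <;> simp [hankel]

theorem hankelMinorIdeal_le_radical_span (h : hankelMinorIdeal x (s + 1) n = ⊥) (hsn : s ≤ n) :
    hankelMinorIdeal x s n ≤ (Ideal.span {hankelMinor x (Fin.val : Fin s → ℕ)}).radical := by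
  induction n, hsn using Nat.le_induction with
  | base => exact hankelMinorIdeal_self x s ▸ Ideal.le_radical
  | succ q hsq ih =>
    have ih := ih (le_bot_iff.mp (h ▸ hankelMinorIdeal_mono x q.le_succ))
    exact fun y hy => Ideal.radical_idem (Ideal.span {hankelMinor x (Fin.val : Fin s → ℕ)}) ▸
      ⟨2, ih (hankelMinorIdeal_sq_le h hsq (Ideal.pow_mem_pow hy 2))⟩

theorem radical_span_hankelMinor (h : hankelMinorIdeal x (s + 1) n = ⊥) (hsn : s ≤ n)
    (hrad : (hankelMinorIdeal x s n).IsRadical) :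
    (Ideal.span {hankelMinor x (Fin.val : Fin s → ℕ)}).radical = hankelMinorIdeal x s n := by
  refine le_antisymm (hrad.radical_le_iff.mpr ?_) (hankelMinorIdeal_le_radical_span h hsn)
  rw [← hankelMinorIdeal_self]
  exact hankelMinorIdeal_mono x hsn

end Squares

section GappedSupport

variable {N s L : ℕ}

/-- The monomial with exponents `m` is divisible by a product of `s` variables with indices below
`L` that pairwise differ by at least `2`. For `L = n + s - 1` these products are the diagonal terms
of the `s`-minors of the generic `s × n` Hankel matrix. -/
def HasGappedSupport (s L : ℕ) (m : Fin N →₀ ℕ) : Prop :=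
  ∃ a : Fin s → Fin N, (∀ i j, i < j → (a i : ℕ) + 2 ≤ a j) ∧ (∀ i, (a i : ℕ) < L) ∧
    ∀ i, m (a i) ≠ 0

theorem hasGappedSupport_one {m : Fin N →₀ ℕ} {j : Fin N} (hj : (j : ℕ) < L) (hm : m j ≠ 0) :
    HasGappedSupport 1 L m :=
  ⟨fun _ => j, fun i k hik => absurd (Subsingleton.elim i k) hik.ne, fun _ => hj, fun _ => hm⟩

theorem HasGappedSupport.cons {m : Fin N →₀ ℕ} (h : HasGappedSupport s (L - 1) m) (e : ℕ) :
    HasGappedSupport s L (m.cons e) := by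
  obtain ⟨a, gap, lt, ne⟩ := h
  refine ⟨fun i => (a i).succ, fun i j hij => ?_, fun i => ?_, fun i => ?_⟩
  · have := gap i j hij
    simp only [Fin.val_succ]
    omega
  · have := lt i
    simp only [Fin.val_succ]
    omega
  · simpa using ne i

theorem HasGappedSupport.cons_cons {m : Fin N →₀ ℕ} (h : HasGappedSupport s (L - 2) m)
    (hL : 0 < L) {d : ℕ} (hd : d ≠ 0) (e : ℕ) :
    HasGappedSupport (s + 1) L ((m.cons e).cons d) := by
  obtain ⟨a, gap, lt, ne⟩ := h
  refine ⟨Fin.cons 0 fun i => (a i).succ.succ, fun i j => ?_, fun i => ?_, fun i => ?_⟩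
  · cases i using Fin.cases <;> cases j using Fin.cases
    · simp
    · simp
    · simp
    · rename_i i j
      intro hij
      have := gap i j (by simpa using hij)
      simp only [Fin.cons_succ, Fin.val_succ]
      omega
  · cases i using Fin.cases with
    | zero => simpa using hL
    | succ i =>
      have := lt i
      simp only [Fin.cons_succ, Fin.val_succ]
      omega
  · cases i using Fin.cases with
    | zero => simpa using hd
    | succ i => simpa using ne i

end GappedSupport

section SecantPoints

variable {K : Type*} [Field K] {N r L : ℕ}

/-- The first `L` coordinates of `x` are a combination of `r` geometric progressions: a point on the
cone over the `r`-secant planes of the rational normal curve. -/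
def IsSecantPoint (r L : ℕ) (x : Fin N → K) : Prop :=
  ∃ c u : Fin r → K, (∀ i, u i ≠ 0) ∧ ∀ j : Fin N, (j : ℕ) < L → x j = ∑ i, c i * u i ^ (j : ℕ)

theorem isSecantPoint_of_forall_le (h : ∀ j : Fin N, L ≤ j) (x : Fin N → K) :
    IsSecantPoint r L x :=
  ⟨0, 1, by simp, fun j hj => absurd hj (h j).not_gt⟩

theorem isSecantPoint_succ_fin_one (x : Fin 1 → K) : IsSecantPoint (r + 1) L x :=
  ⟨Pi.single 0 (x 0), 1, by simp, fun j _ => by simp [Subsingleton.elim j 0]⟩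

theorem IsSecantPoint.exists_cons {y : Fin N → K} (h : IsSecantPoint r (L - 1) y) :
    ∃ y₀, IsSecantPoint r L (Fin.cons y₀ y : Fin (N + 1) → K) := by
  obtain ⟨c, u, hu, hy⟩ := h
  refine ⟨∑ i, c i / u i, fun i => c i / u i, u, hu, Fin.cases (by simp) fun j hj => ?_⟩
  rw [Fin.val_succ] at hj ⊢
  rw [Fin.cons_succ, hy j (by omega)]
  refine Finset.sum_congr rfl fun i _ => ?_
  rw [pow_succ', ← mul_assoc, div_mul_cancel₀ _ (hu i)]

-- The progression `σ⁻¹ (w σ) ^ j` is added to an extension of `y`; as `σ → 0` it only contributes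
-- a pole in coordinate `0` and the constant `w` in coordinate `1`.
theorem IsSecantPoint.exists_cons_cons {y : Fin N → K} (h : IsSecantPoint r (L - 2) y) :
    ∃ y₀ y₁, ∀ w ≠ 0, ∀ σ ≠ 0, IsSecantPoint (r + 1) L
      (Fin.cons (σ⁻¹ + y₀)
        (Fin.cons (w + y₁) fun j => y j + w ^ ((j : ℕ) + 2) * σ ^ ((j : ℕ) + 1)) :
        Fin (N + 2) → K) := by
  obtain ⟨c, u, hu, hy⟩ := h
  refine ⟨∑ i, c i / u i ^ 2, ∑ i, c i / u i ^ 2 * u i, fun w hw σ hσ =>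
    ⟨Fin.cons σ⁻¹ fun i => c i / u i ^ 2, Fin.cons (w * σ) u,
      Fin.cases (mul_ne_zero hw hσ) hu, fun j hj => ?_⟩⟩
  simp only [Fin.sum_univ_succ, Fin.cons_zero, Fin.cons_succ]
  cases j using Fin.cases with
  | zero => simp
  | succ j =>
    cases j using Fin.cases with
    | zero =>
      simp only [Fin.cons_succ, Fin.cons_zero, Fin.val_succ, Fin.val_zero, zero_add, pow_one]
      field_simp
    | succ j =>
      simp only [Fin.cons_succ, Fin.val_succ] at hj ⊢
      rw [hy j (by omega), add_comm]
      congr 1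
      · rw [inv_mul_eq_div, eq_div_iff hσ]
        ring
      · refine Finset.sum_congr rfl fun i _ => ?_
        rw [add_assoc, add_comm (j : ℕ), pow_add, ← mul_assoc,
          div_mul_cancel₀ _ (pow_ne_zero 2 (hu i))]

end SecantPoints

section Vanishing

variable {K : Type*} [Field K] [Infinite K] {N r L : ℕ}

theorem eq_zero_of_forall_ne_eval_eq_zero {D : Type*} [CommRing D] [IsDomain D] [Infinite D]
    {p : D[X]} (c : D) (h : ∀ x ≠ c, p.eval x = 0) : p = 0 :=
  Polynomial.eq_zero_of_infinite_isRoot p <| (Set.finite_singleton c).infinite_compl.mono h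

-- Multiplying by `σ ^ d` clears the pole of `P (σ⁻¹ + y)` at `σ = 0`.
theorem eval_zero_coeff_eq_zero_of_eval_inv_add {P : K[X][X]} {d : ℕ} (hd : P.natDegree ≤ d)
    {y : K} (h : ∀ σ ≠ 0, (P.map (Polynomial.evalRingHom σ)).eval (σ⁻¹ + y) = 0) :
    (P.coeff d).eval 0 = 0 := by
  set Φ : K[X] := ∑ k ∈ Finset.range (d + 1),
    P.coeff k * (1 + Polynomial.C y * Polynomial.X) ^ k * Polynomial.X ^ (d - k) with hΦ
  have hΦ_zero : Φ = 0 := by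
    refine eq_zero_of_forall_ne_eval_eq_zero 0 fun σ hσ => ?_
    rw [← mul_zero (σ ^ d), ← h σ hσ, Polynomial.eval_map,
      Polynomial.eval₂_eq_sum_range' _ (Nat.lt_succ_of_le hd), Finset.mul_sum, hΦ,
      Polynomial.eval_finsetSum]
    refine Finset.sum_congr rfl fun k hk => ?_
    have split : σ ^ d = σ ^ (d - k) * σ ^ k := by
      rw [← pow_add, Nat.sub_add_cancel (Finset.mem_range_succ_iff.mp hk)]
    have clear : 1 + y * σ = σ * (σ⁻¹ + y) := by field_simp
    simp only [Polynomial.eval_mul, Polynomial.eval_pow, Polynomial.eval_add, Polynomial.eval_one,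
      Polynomial.eval_C, Polynomial.eval_X, Polynomial.coe_evalRingHom]
    rw [clear, split, mul_pow]
    ring
  have := congrArg (Polynomial.eval 0) hΦ_zero
  rw [hΦ, Polynomial.eval_finsetSum, Finset.sum_range_succ, Finset.sum_eq_zero] at this
  · simpa using this
  · intro k hk
    have : d - k ≠ 0 := Nat.sub_ne_zero_of_lt (Finset.mem_range.mp hk)
    simp [this]

theorem eval_leadingCoeff_finSuccEquiv_eq_zero {f : MvPolynomial (Fin (N + 1)) K} {y : K}
    (Z : Fin N → K[X])
    (h : ∀ σ ≠ 0, eval (Fin.cons (σ⁻¹ + y) fun j => (Z j).eval σ : Fin (N + 1) → K) f = 0) :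
    eval (fun j => (Z j).eval 0) (finSuccEquiv K N f).leadingCoeff = 0 := by
  have specialize (σ : K) : (Polynomial.evalRingHom σ).comp (eval₂Hom Polynomial.C Z)
      = eval fun j => (Z j).eval σ :=
    MvPolynomial.ringHom_ext (by simp) (by simp)
  rw [← specialize, RingHom.comp_apply, Polynomial.leadingCoeff, ← Polynomial.coeff_map,
    Polynomial.coe_evalRingHom]
  refine eval_zero_coeff_eq_zero_of_eval_inv_add (y := y) Polynomial.natDegree_map_le fun σ hσ => ?_
  rw [Polynomial.map_map, specialize, ← eval_eq_eval_mv_eval']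
  exact h σ hσ

theorem map_eval_leadingCoeff_eq_zero {f : MvPolynomial (Fin (N + 2)) K}
    (hf : ∀ x, IsSecantPoint (r + 1) L x → eval x f = 0)
    {y : Fin N → K} (hy : IsSecantPoint r (L - 2) y) :
    (finSuccEquiv K N (finSuccEquiv K (N + 1) f).leadingCoeff).map (eval y) = 0 := by
  obtain ⟨y₀, y₁, secant⟩ := hy.exists_cons_cons
  refine eq_zero_of_forall_ne_eval_eq_zero y₁ fun v hv => ?_
  rw [← eval_eq_eval_mv_eval']
  set w := v - y₁
  set Z : Fin (N + 1) → K[X] := Fin.cons (Polynomial.C v) fun j =>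
    Polynomial.C (y j) + Polynomial.C (w ^ ((j : ℕ) + 2)) * Polynomial.X ^ ((j : ℕ) + 1) with hZ
  have Z_zero : (fun j => (Z j).eval 0) = Fin.cons v y := by
    ext j
    refine Fin.cases ?_ (fun j => ?_) j <;> simp [hZ]
  rw [← Z_zero]
  refine eval_leadingCoeff_finSuccEquiv_eq_zero (y := y₀) Z fun σ hσ => ?_
  convert hf _ (secant w (sub_ne_zero.mpr hv) σ hσ) using 4
  ext j
  refine Fin.cases ?_ (fun j => ?_) j <;> simp [hZ, w]

theorem eq_zero_of_forall_isSecantPoint (f : MvPolynomial (Fin N) K)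
    (hsupp : ∀ m ∈ f.support, ¬HasGappedSupport (r + 1) L m)
    (hf : ∀ x, IsSecantPoint r L x → eval x f = 0) : f = 0 := by
  induction N using Nat.strong_induction_on generalizing L r with
  | _ N ih =>
  by_cases hall : ∀ x : Fin N → K, IsSecantPoint r L x
  · exact MvPolynomial.funext fun x => by rw [hf x (hall x), map_zero]
  have hL : 0 < L := Nat.pos_of_ne_zero fun h => hall (isSecantPoint_of_forall_le (by simp [h]))
  rcases N with _ | N
  · exact (hall (isSecantPoint_of_forall_le fun j => j.elim0)).elim
  set p := finSuccEquiv K N f with hp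
  suffices p.leadingCoeff = 0 by simpa [hp] using this
  rcases Nat.eq_zero_or_pos p.natDegree with hd | hd
  · refine ih N N.lt_succ_self _ (L := L - 1) (r := r) (fun m hm h => ?_) fun y hy => ?_
    · exact hsupp _ (mem_support_coeff_finSuccEquiv.mp hm) (h.cons _)
    · obtain ⟨y₀, hy₀⟩ := hy.exists_cons
      have := hf _ hy₀
      rwa [eval_eq_eval_mv_eval', ← hp, Polynomial.eq_C_of_natDegree_eq_zero hd,
        Polynomial.map_C, Polynomial.eval_C, ← hd] at this
  rcases r with _ | r
  · by_contra hlead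
    obtain ⟨m, hm⟩ := MvPolynomial.support_nonempty.mpr hlead
    exact hsupp _ (mem_support_coeff_finSuccEquiv.mp hm)
      (hasGappedSupport_one (j := 0) hL (by rw [Finsupp.cons_zero]; exact hd.ne'))
  rcases N with _ | N
  · exact (hall isSecantPoint_succ_fin_one).elim
  suffices finSuccEquiv K N p.leadingCoeff = 0 by simpa using this
  ext1 e
  refine ih N (by omega) _ (L := L - 2) (r := r) (fun m hm h => ?_) fun y hy => ?_
  · rw [mem_support_coeff_finSuccEquiv] at hm
    exact hsupp _ (mem_support_coeff_finSuccEquiv.mp hm) (h.cons_cons hL hd.ne' e)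
  · simpa using congrArg (Polynomial.coeff · e) (map_eval_leadingCoeff_eq_zero hf hy)

end Vanishing

section Straightening

variable {N n r s : ℕ}

theorem sum_sq_perm_add_lt {g : Fin s → ℕ} (hg : StrictMono g) {σ : Equiv.Perm (Fin s)}
    (hσ : σ ≠ 1) : ∑ i, ((σ i : ℕ) + g i) ^ 2 < ∑ i : Fin s, ((i : ℕ) + g i) ^ 2 := by
  have rearrangement : ∑ i, (σ i : ℕ) * g i < ∑ i : Fin s, (i : ℕ) * g i := by
    have hmono : Monovary (fun i : Fin s => (i : ℕ)) g := fun i j hij => (hg.lt_iff_lt.mp hij).le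
    refine hmono.sum_comp_perm_mul_lt_sum_mul_iff.mpr fun h => hσ ?_
    refine (Equiv.Perm.monotone_iff σ).mp fun i j hij => ?_
    rcases hij.lt_or_eq with hij | rfl
    · exact h (hg hij)
    · rfl
  have squares : ∑ i, (σ i : ℕ) ^ 2 = ∑ i : Fin s, (i : ℕ) ^ 2 :=
    Equiv.sum_comp σ fun i : Fin s => (i : ℕ) ^ 2
  simp only [add_sq, Finset.sum_add_distrib, mul_assoc, ← Finset.mul_sum, squares]
  omega

variable {R : Type*} [CommRing R]

/-- The variables of `MvPolynomial (Fin N) R` as a sequence indexed by `ℕ`, continued by `0` so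
that `hankel`, which takes sequences, applies. -/
noncomputable def hankelVar (R : Type*) [CommSemiring R] (N k : ℕ) : MvPolynomial (Fin N) R :=
  if h : k < N then X ⟨k, h⟩ else 0

theorem hankelVar_of_lt {k : ℕ} (h : k < N) : hankelVar R N k = X ⟨k, h⟩ :=
  dif_pos h

/-- The exponent of the `σ`-term in the Leibniz expansion of the minor
`hankelMinor (hankelVar R N) g`. -/
noncomputable def minorExponent {g : Fin s → ℕ} (h : ∀ i j : Fin s, (i : ℕ) + g j < N)
    (σ : Equiv.Perm (Fin s)) : Fin N →₀ ℕ :=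
  ∑ i, Finsupp.single ⟨σ i + g i, h _ _⟩ 1

theorem hankelMinor_hankelVar {g : Fin s → ℕ} (h : ∀ i j : Fin s, (i : ℕ) + g j < N) :
    hankelMinor (hankelVar R N) g
      = ∑ σ : Equiv.Perm (Fin s), Equiv.Perm.sign σ • monomial (minorExponent h σ) 1 := by
  rw [hankelMinor, det_apply]
  refine Finset.sum_congr rfl fun σ _ => congrArg _ ?_
  rw [minorExponent, monomial_sum_one]
  exact Finset.prod_congr rfl fun i _ => hankelVar_of_lt (h (σ i) i)

/-- The weight on exponents in which the variable with index `j` counts `j ^ 2`. The diagonal term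
of a Hankel minor is its only term of maximal weight. -/
noncomputable def squareWeight : (Fin N →₀ ℕ) →+ ℕ :=
  Finsupp.weight fun j : Fin N => (j : ℕ) ^ 2

theorem squareWeight_minorExponent {g : Fin s → ℕ} (h : ∀ i j : Fin s, (i : ℕ) + g j < N)
    (σ : Equiv.Perm (Fin s)) :
    squareWeight (minorExponent h σ) = ∑ i, ((σ i : ℕ) + g i) ^ 2 := by
  simp [squareWeight, minorExponent, Finsupp.weight_single]

theorem monomial_sub_hankelMinor_mem {g : Fin s → ℕ} (h : ∀ i j : Fin s, (i : ℕ) + g j < N)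
    (hg : StrictMono g) :
    monomial (minorExponent h 1) 1 - hankelMinor (hankelVar R N) g ∈
      restrictSupport R {m | squareWeight m < squareWeight (minorExponent h 1)} := by
  rw [hankelMinor_hankelVar h, ← Finset.add_sum_erase _ _ (Finset.mem_univ 1),
    Equiv.Perm.sign_one, one_smul, sub_add_cancel_left]
  refine Submodule.neg_mem _ (Submodule.sum_mem _ fun σ hσ => ?_)
  refine Submodule.smul_of_tower_mem _ _ ((monomial_mem_restrictSupport R).mpr (Or.inl ?_))
  rw [Set.mem_ofPred_eq, squareWeight_minorExponent, squareWeight_minorExponent]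
  exact sum_sq_perm_add_lt hg (Finset.ne_of_mem_erase hσ)

theorem sum_single_one_le {ι α : Type*} [Fintype ι] {a : ι → α} (ha : Function.Injective a)
    {m : α →₀ ℕ} (hm : ∀ i, m (a i) ≠ 0) : ∑ i, Finsupp.single (a i) 1 ≤ m := by
  classical
  intro k
  rw [Finsupp.finsetSum_apply]
  by_cases hk : ∃ i, a i = k
  · obtain ⟨i, rfl⟩ := hk
    simpa [Finsupp.single_apply, ha.eq_iff] using Nat.one_le_iff_ne_zero.mpr (hm i)
  · push Not at hk
    simp [hk]

theorem HasGappedSupport.exists_minorExponent_le (hN : n + r ≤ N) {m : Fin N →₀ ℕ}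
    (hm : HasGappedSupport (r + 1) (n + r) m) :
    ∃ (g : Fin (r + 1) → ℕ) (h : ∀ i j : Fin (r + 1), (i : ℕ) + g j < N),
      StrictMono g ∧ (∀ j, g j < n) ∧ minorExponent h 1 ≤ m := by
  obtain ⟨a, gap, lt, ne⟩ := hm
  have strictMono : StrictMono fun i => (a i : ℤ) - (i : ℕ) := by
    refine Fin.strictMono_iff_lt_succ.mpr fun i => ?_
    have := gap i.castSucc i.succ Fin.castSucc_lt_succ
    simp only [Fin.val_succ, Fin.val_castSucc]
    omega
  have le (i : Fin (r + 1)) : (i : ℕ) ≤ a i := by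
    have := strictMono.monotone (Fin.zero_le i)
    simp only [Fin.val_zero] at this
    omega
  have lt (i : Fin (r + 1)) : (a i : ℕ) - i < n := by
    have mono := strictMono.monotone (Fin.le_last i)
    have lt_last := lt (Fin.last r)
    have := le i
    simp only [Fin.val_last] at mono
    omega
  have hbound (i j : Fin (r + 1)) : (i : ℕ) + (a j - j) < N := by
    have := lt j
    omega
  refine ⟨fun i => a i - i, hbound, fun i j hij => ?_, lt, ?_⟩
  · have := strictMono hij
    have := le i
    have := le j
    grind
  · have diagonal :
        minorExponent (g := fun i => a i - i) hbound 1 = ∑ i, Finsupp.single (a i) 1 := by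
      refine Finset.sum_congr rfl fun i _ => ?_
      congr 1
      exact Fin.ext (Nat.add_sub_cancel' (le i))
    rw [diagonal]
    have ha : StrictMono a := fun i j hij => by have := gap i j hij; omega
    exact sum_single_one_le ha.injective ne

theorem monomial_mem_sup_of_hasGappedSupport (hN : n + r ≤ N) {m : Fin N →₀ ℕ}
    (hm : HasGappedSupport (r + 1) (n + r) m) :
    monomial m 1 ∈ (hankelMinorIdeal (hankelVar R N) (r + 1) n).restrictScalars R ⊔
      restrictSupport R {m' | squareWeight m' < squareWeight m} := by
  obtain ⟨g, h, mono, lt, le⟩ := hm.exists_minorExponent_le hN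
  obtain ⟨m', rfl⟩ := exists_add_of_le le
  have lower := Submodule.mul_mem_mul
    ((monomial_mem_restrictSupport R).mpr (Or.inl (Set.mem_singleton m')) :
      monomial m' (1 : R) ∈ _)
    (monomial_sub_hankelMinor_mem (R := R) h mono)
  rw [← restrictSupport_add] at lower
  have expand : monomial (minorExponent h 1 + m') (1 : R)
      = monomial m' 1 * hankelMinor (hankelVar R N) g
        + monomial m' 1 * (monomial (minorExponent h 1) 1 - hankelMinor (hankelVar R N) g) := by
    rw [← mul_add, add_sub_cancel, monomial_mul, one_mul, add_comm]
  rw [expand]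
  refine Submodule.add_mem_sup ?_ (restrictSupport_mono R ?_ lower)
  · exact Ideal.mul_mem_left _ _ (hankelMinor_mem_hankelMinorIdeal _ lt)
  · rintro _ ⟨_, rfl, e, he, rfl⟩
    rw [Set.mem_ofPred_eq] at he ⊢
    rw [add_comm (minorExponent h 1)]
    simpa using he

variable (R) in
theorem hankelMinorIdeal_sup_restrictSupport (hN : n + r ≤ N) :
    (hankelMinorIdeal (hankelVar R N) (r + 1) n).restrictScalars R ⊔
      restrictSupport R {m : Fin N →₀ ℕ | ¬HasGappedSupport (r + 1) (n + r) m} = ⊤ := by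
  set V := (hankelMinorIdeal (hankelVar R N) (r + 1) n).restrictScalars R ⊔
    restrictSupport R {m : Fin N →₀ ℕ | ¬HasGappedSupport (r + 1) (n + r) m}
  have monomials (d : ℕ) (m : Fin N →₀ ℕ)
      (hd : squareWeight m = d) : monomial m (1 : R) ∈ V := by
    induction d using Nat.strong_induction_on generalizing m with
    | _ d ih =>
    by_cases hm : HasGappedSupport (r + 1) (n + r) m
    · refine (sup_le le_sup_left ?_ : _ ≤ V) (monomial_mem_sup_of_hasGappedSupport hN hm)
      rw [restrictSupport_eq_span, Submodule.span_le]
      rintro _ ⟨m', hm', rfl⟩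
      exact ih _ (hd ▸ hm') m' rfl
    · exact Submodule.mem_sup_right ((monomial_mem_restrictSupport R).mpr (Or.inl hm))
  rw [← top_le_iff, ← restrictSupport_univ, restrictSupport_eq_span, Submodule.span_le]
  rintro _ ⟨m, -, rfl⟩
  exact monomials _ m rfl

end Straightening

section Radical

variable {N n r s : ℕ}

theorem hankelMinor_eq_zero_of_eq_sum_mul_pow {R : Type*} [CommRing R] {x : ℕ → R} {g : Fin s → ℕ}
    {c u : Fin r → R} (hrs : r < s)
    (hx : ∀ i j : Fin s, x (i + g j) = ∑ k, c k * u k ^ ((i : ℕ) + g j)) :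
    hankelMinor x g = 0 := by
  have factor : hankel x Fin.val g
      = (of fun (i : Fin s) k => c k * u k ^ (i : ℕ)) * of fun k j => u k ^ g j := by
    ext i j
    simp [hankel, hx, mul_apply, pow_add, mul_assoc]
  rw [hankelMinor, factor]
  exact det_mul_eq_zero_of_card_lt (by simpa using hrs) _ _

theorem eval₂_eq_zero_of_isSecantPoint {R K : Type*} [CommRing R] [Field K] (φ : R →+* K)
    (hN : n + r ≤ N) {x : Fin N → K} (hx : IsSecantPoint r (n + r) x) {f : MvPolynomial (Fin N) R}
    (hf : f ∈ (hankelMinorIdeal (hankelVar R N) (r + 1) n).radical) : eval₂ φ x f = 0 := by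
  suffices (hankelMinorIdeal (hankelVar R N) (r + 1) n).radical ≤ RingHom.ker (eval₂Hom φ x) from
    this hf
  refine (RingHom.ker_isPrime (eval₂Hom φ x)).radical_le_iff.mpr (Ideal.span_le.mpr ?_)
  rintro _ ⟨g, hg, rfl⟩
  obtain ⟨c, u, -, hx⟩ := hx
  rw [SetLike.mem_coe, RingHom.mem_ker, map_hankelMinor]
  refine hankelMinor_eq_zero_of_eq_sum_mul_pow r.lt_succ_self (c := c) (u := u) fun i j => ?_
  have hlt : (i : ℕ) + g j < n + r := by have := hg j; omega
  rw [Function.comp_apply, hankelVar_of_lt (hlt.trans_le hN), coe_eval₂Hom, eval₂_X, hx _ hlt]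

theorem map_eq_zero_of_mem_radical {R K : Type*} [CommRing R] [Field K] [Infinite K] (φ : R →+* K)
    (hN : n + r ≤ N) {f : MvPolynomial (Fin N) R}
    (hf : f ∈ (hankelMinorIdeal (hankelVar R N) (r + 1) n).radical)
    (hsupp : f ∈ restrictSupport R {m | ¬HasGappedSupport (r + 1) (n + r) m}) :
    map φ f = 0 := by
  refine eq_zero_of_forall_isSecantPoint (r := r) (L := n + r) _ (fun m hm => ?_) fun x hx => ?_
  · exact (mem_restrictSupport_iff R).mp hsupp (support_map_subset φ f hm)
  · rw [eval_map]
    exact eval₂_eq_zero_of_isSecantPoint φ hN hx hf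

theorem eq_zero_of_forall_map_residueField_eq_zero {σ R : Type*} [CommRing R] [IsReduced R]
    {f : MvPolynomial σ R}
    (h : ∀ (𝔭 : Ideal R) [𝔭.IsPrime],
      map (algebraMap R (AlgebraicClosure 𝔭.ResidueField)) f = 0) : f = 0 := by
  ext m
  rw [coeff_zero]
  refine (nilpotent_iff_mem_prime.mpr fun 𝔭 h𝔭 => ?_).eq_zero
  have := congrArg (coeff m) (h 𝔭)
  rw [coeff_map, coeff_zero,
    IsScalarTower.algebraMap_apply R 𝔭.ResidueField (AlgebraicClosure 𝔭.ResidueField),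
    map_eq_zero] at this
  exact Ideal.algebraMap_residueField_eq_zero.mp this

theorem isRadical_hankelMinorIdeal {R : Type*} [CommRing R] [IsReduced R] (hN : n + s ≤ N + 1) :
    (hankelMinorIdeal (hankelVar R N) s n).IsRadical := by
  rcases s with _ | r
  · rw [hankelMinorIdeal_zero]
    exact fun _ _ => Submodule.mem_top
  intro f hf
  have hmem : f ∈ (⊤ : Submodule R (MvPolynomial (Fin N) R)) := Submodule.mem_top
  rw [← hankelMinorIdeal_sup_restrictSupport R (by omega : n + r ≤ N)] at hmem
  obtain ⟨q, hq, g, hg, rfl⟩ := Submodule.mem_sup.mp hmem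
  suffices g = 0 by simpa [this] using hq
  refine eq_zero_of_forall_map_residueField_eq_zero fun 𝔭 _ => ?_
  refine map_eq_zero_of_mem_radical _ (by omega) ?_ hg
  exact (Ideal.add_mem_iff_right _ (Ideal.le_radical hq)).mp hf

theorem isRadical_hankelMinorIdeal_quotient {R : Type*} [CommRing R] [IsReduced R]
    (hN : n + s ≤ N + 1) {I : Ideal (MvPolynomial (Fin N) R)}
    (hI : I = hankelMinorIdeal (hankelVar R N) (s + 1) n) :
    (hankelMinorIdeal (Ideal.Quotient.mk I ∘ hankelVar R N) s n).IsRadical := by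
  have ker_le : RingHom.ker (Ideal.Quotient.mk I) ≤ hankelMinorIdeal (hankelVar R N) s n := by
    rw [Ideal.mk_ker, hI]
    exact hankelMinorIdeal_succ_le _ s n
  rw [← map_hankelMinorIdeal, ← Ideal.radical_eq_iff,
    ← Ideal.map_radical_of_surjective Ideal.Quotient.mk_surjective ker_le,
    (isRadical_hankelMinorIdeal hN).radical]

end Radical
theorem hankel_pk_squared_general (F : Type*) [CommRing F] [IsReduced F] {s n : ℕ} (hsn : s < n)
    (H : Matrix (Fin (s + 1)) (Fin n) (MvPolynomial (Fin (n + s)) F))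
    (hH : ∀ (a : Fin (s + 1)) (b : Fin n) (h : (a : ℕ) + b < n + s), H a b = X ⟨a + b, h⟩)
    (I : Ideal (MvPolynomial (Fin (n + s)) F))
    (hI : I = Ideal.span (Set.range fun g : Fin (s + 1) → Fin n => (H.submatrix id g).det))
    (pk : ℕ → Ideal (MvPolynomial (Fin (n + s)) F ⧸ I))
    (hpk : ∀ k, pk k = Ideal.span {x | ∃ g : Fin s → Fin n, (∀ j, (g j : ℕ) < n - k + 1) ∧
      x = Ideal.Quotient.mk I (H.submatrix Fin.castSucc g).det})
    (Δ : MvPolynomial (Fin (n + s)) F ⧸ I)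
    (hΔ : Δ = Ideal.Quotient.mk I (H.submatrix Fin.castSucc (Fin.castLE hsn.le)).det) :
    (∀ k, 1 ≤ k → k ≤ n - s → pk k ^ 2 ≤ pk (k + 1)) ∧ (Ideal.span {Δ}).radical = pk 1 := by
  set x := hankelVar F (n + s)
  obtain rfl : H = hankel x Fin.val Fin.val :=
    ext fun a b => (hH a b (by omega)).trans (hankelVar_of_lt _).symm
  have hI : I = hankelMinorIdeal x (s + 1) n := hI.trans (span_range_hankelMinor x (s + 1) n)
  have minor (g : Fin s → ℕ) : Ideal.Quotient.mk I (hankelMinor x g)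
      = hankelMinor (Ideal.Quotient.mk I ∘ x) g := map_hankelMinor _ x g
  have hpk (k : ℕ) (hk : 1 ≤ k) :
      pk k = hankelMinorIdeal (Ideal.Quotient.mk I ∘ x) s (n - k + 1) := by
    rw [hpk, ← span_hankelMinor_fin _ _ (by omega : n - k + 1 ≤ n)]
    simp only [← minor]
    rfl
  have hΔ : Δ = hankelMinor (Ideal.Quotient.mk I ∘ x) (Fin.val : Fin s → ℕ) := hΔ.trans (minor _)
  have bot : hankelMinorIdeal (Ideal.Quotient.mk I ∘ x) (s + 1) n = ⊥ := by
    rw [← map_hankelMinorIdeal, ← hI, Ideal.map_quotient_self]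
  refine ⟨fun k hk hkn => ?_, ?_⟩
  · have bot_k : hankelMinorIdeal (Ideal.Quotient.mk I ∘ x) (s + 1) (n - k + 1) = ⊥ :=
      le_bot_iff.mp (bot ▸ hankelMinorIdeal_mono _ (by omega))
    rw [hpk k hk, hpk (k + 1) k.succ_pos]
    exact (hankelMinorIdeal_sq_le bot_k (by omega)).trans (hankelMinorIdeal_mono _ (by omega))
  · rw [hpk 1 le_rfl, hΔ, Nat.sub_add_cancel (by omega)]
    exact radical_span_hankelMinor bot hsn.le
      (isRadical_hankelMinorIdeal_quotient (n + s).le_succ hI)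

/-- With `p^⟨k⟩ ⊆ R` the ideal generated by the `(t-1)`-minors of the top-left
`(t-1)×(n-k+1)` submatrix of the Hankel matrix, one has `(p^⟨k⟩)² ⊆ p^⟨k+1⟩` for
`1 ≤ k ≤ n-t+1`; consequently the radical of the principal ideal `(Δ)`,
`Δ = [1 ... t-1 | 1 ... t-1]`, equals `p = p^⟨1⟩`. -/
theorem hankel_pk_squared (F : Type*) [Field F] (t n : ℕ) (ht : 2 ≤ t) (htn : t ≤ n)
    (H : Matrix (Fin t) (Fin n) (MvPolynomial (Fin (n + t - 1)) F))
    (hH : ∀ a b, H a b = X ⟨(a : ℕ) + (b : ℕ), by have := a.2; have := b.2; omega⟩)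
    (I : Ideal (MvPolynomial (Fin (n + t - 1)) F))
    (hI : I = Ideal.span (Set.range fun g : Fin t → Fin n => (H.submatrix id g).det))
    (pk : ℕ → Ideal (MvPolynomial (Fin (n + t - 1)) F ⧸ I))
    (hpk : ∀ k, pk k = Ideal.span {x | ∃ g : Fin (t - 1) → Fin n,
      (∀ j, (g j : ℕ) < n - k + 1) ∧
      x = Ideal.Quotient.mk I
        ((H.submatrix (fun i : Fin (t - 1) => (⟨i.1, by have := i.2; omega⟩ : Fin t)) g).det)})
    (Δ : MvPolynomial (Fin (n + t - 1)) F ⧸ I)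
    (hΔ : Δ = Ideal.Quotient.mk I
      ((H.submatrix (fun i : Fin (t - 1) => (⟨i.1, by have := i.2; omega⟩ : Fin t))
        (fun j : Fin (t - 1) => (⟨j.1, by have := j.2; omega⟩ : Fin n))).det)) :
    (∀ k, 1 ≤ k → k ≤ n - t + 1 → (pk k) ^ 2 ≤ pk (k + 1)) ∧
    (Ideal.span {Δ}).radical = pk 1 := by
  obtain ⟨s, rfl⟩ : ∃ s, t = s + 1 := ⟨t - 1, by omega⟩
  rw [show n - (s + 1) + 1 = n - s by omega]
  exact hankel_pk_squared_general F htn H (fun a b _ => hH a b) I hI pk hpk Δ hΔ
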